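/- arXiv:2410.00322 — 4 statements merged into one kernel-verified Lean document; each statement's English description precedes it below -/
import Mathlib

section
/- Let X₁ and X₂ be independent real-valued random variables with probability density functions f₁ and f₂, where f₂ is symmetric about its mean μ₂ (i.e. f₂(μ₂ + t) = f₂(μ₂ − t) for all t) and X₂ is integrable. Then for every w ∈ (0,1) and every mean μ₁ ∈ ℝ, E[ X₂ · 1{(1−w)(X₂−μ₂)² < w(X₁−μ₁)²} ] = μ₂ · P( (1−w)(X₂−μ₂)² < w(X₁−μ₁)² ). Consequently, conditioned on the event that the weighted quadratic deviation of X₂ from its mean is smaller than that of X₁, the conditional expectation of X₂ equals μ₂. -/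
/-!
Reflecting `X₂` about its centre `μ₂` preserves the law of `(X₁, X₂)`, because `X₂` is symmetric and
independent of `X₁`. It also preserves the disclosure event, which sees `X₂` only through
`(X₂ - μ₂) ^ 2`, but it changes the sign of `X₂ - μ₂`. Hence `(X₂ - μ₂) · 1_A` has the same law as
its negative, and its expectation vanishes.
-/

open MeasureTheory
open ProbabilityTheory Equiv
open scoped ENNReal

section PointReflection

theorem measurePreserving_withDensity_comp {α β : Type*} [MeasurableSpace α] [MeasurableSpace β]
    {ν : Measure α} {ρ : Measure β} {g : α → β} (hg : MeasurePreserving g ν ρ)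
    (hg_emb : MeasurableEmbedding g) (f : β → ℝ≥0∞) :
    MeasurePreserving g (ν.withDensity (f ∘ g)) (ρ.withDensity f) where
  measurable := hg.measurable
  map_eq := by
    ext s hs
    rw [Measure.map_apply hg.measurable hs, withDensity_apply _ hs,
      withDensity_apply _ (hg.measurable hs)]
    exact hg.setLIntegral_comp_preimage_emb hg_emb f s

variable {G : Type*} [AddCommGroup G]

theorem coe_pointReflection_eq_sub (c : G) : ⇑(pointReflection c) = fun y ↦ c + c - y := by
  ext y
  simp only [pointReflection_apply, vsub_eq_sub, vadd_eq_add]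
  abel

variable [MeasurableSpace G] [MeasurableAdd G] [MeasurableNeg G]

theorem measurableEmbedding_pointReflection (c : G) : MeasurableEmbedding (pointReflection c) := by
  have hmeas : Measurable (pointReflection c) := by
    rw [coe_pointReflection_eq_sub]
    simp only [sub_eq_add_neg]
    fun_prop
  exact MeasurableEquiv.measurableEmbedding
    ⟨pointReflection c, hmeas, by rwa [pointReflection_symm]⟩

theorem measurePreserving_pointReflection (ν : Measure G) [ν.IsNegInvariant]
    [ν.IsAddLeftInvariant] (c : G) : MeasurePreserving (pointReflection c) ν ν := by
  simpa only [coe_pointReflection_eq_sub] using ν.measurePreserving_sub_left (c + c)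

theorem identDistrib_pointReflection_of_map_eq_withDensity {Ω : Type*} [MeasurableSpace Ω]
    {μ : Measure Ω} {Y : Ω → G} (hY : AEMeasurable Y μ) {ν : Measure G} [ν.IsNegInvariant]
    [ν.IsAddLeftInvariant] {f : G → ℝ≥0∞} (hpdf : μ.map Y = ν.withDensity f) {c : G}
    (hf : ∀ t, f (c + t) = f (c - t)) :
    IdentDistrib (fun ω ↦ pointReflection c (Y ω)) Y μ μ := by
  have hσ := measurableEmbedding_pointReflection c
  have hf_comp : f ∘ pointReflection c = f := by
    ext y
    simpa [coe_pointReflection_eq_sub, add_sub_assoc] using hf (c - y)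
  have hpres : MeasurePreserving (pointReflection c) (μ.map Y) (μ.map Y) := by
    simpa only [hpdf, hf_comp] using
      measurePreserving_withDensity_comp (measurePreserving_pointReflection ν c) hσ f
  exact ⟨hσ.measurable.comp_aemeasurable hY, hY,
    (AEMeasurable.map_map_of_aemeasurable hσ.measurable.aemeasurable hY).symm.trans hpres.map_eq⟩

end PointReflection

section SymmetricEvent

variable {Ω E F : Type*} [MeasurableSpace Ω] [MeasurableSpace E] [NormedAddCommGroup F]
  [NormedSpace ℝ F] [MeasurableSpace F] [BorelSpace F] {μ : Measure Ω}

theorem integral_eq_zero_of_identDistrib_neg {Z : Ω → F}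
    (hZ : IdentDistrib (fun ω ↦ -Z ω) Z μ μ) : ∫ ω, Z ω ∂μ = 0 := by
  have := IsAddTorsionFree.of_isTorsionFree ℝ F
  have hneg := hZ.integral_eq
  rwa [integral_neg, neg_eq_self] at hneg

variable [IsFiniteMeasure μ] {X : Ω → E} {Y : Ω → F} {c : F} {S : Set (E × F)}

theorem setIntegral_sub_eq_zero_of_pointReflection_invariant (hX : AEMeasurable X μ)
    (hXY : X ⟂ᵢ[μ] Y) (hY : IdentDistrib (fun ω ↦ pointReflection c (Y ω)) Y μ μ)
    (hS : MeasurableSet S) (hSc : ∀ x y, (x, pointReflection c y) ∈ S ↔ (x, y) ∈ S) :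
    ∫ ω in {ω | (X ω, Y ω) ∈ S}, (Y ω - c) ∂μ = 0 := by
  let g : E × F → F := S.indicator fun p ↦ p.2 - c
  have hg : Measurable g := (measurable_snd.sub_const c).indicator hS
  have hg_odd (x : E) (y : F) : g (x, pointReflection c y) = -g (x, y) := by
    have hc : pointReflection c y - c = -(y - c) := by simp [pointReflection_apply]
    by_cases h : (x, y) ∈ S <;>
      simp only [g, Set.indicator, hSc, h, hc, if_true, if_false, neg_zero]
  have hσ := (measurableEmbedding_pointReflection c).measurable
  have hlaw : IdentDistrib (fun ω ↦ (X ω, pointReflection c (Y ω))) (fun ω ↦ (X ω, Y ω)) μ μ :=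
    (IdentDistrib.refl hX).prodMk hY (hXY.comp measurable_id hσ) hXY
  have hneg : IdentDistrib (fun ω ↦ -g (X ω, Y ω)) (fun ω ↦ g (X ω, Y ω)) μ μ := by
    simpa only [Function.comp_def, hg_odd] using hlaw.comp hg
  calc ∫ ω in {ω | (X ω, Y ω) ∈ S}, (Y ω - c) ∂μ
    _ = ∫ ω, g (X ω, Y ω) ∂μ :=
      (integral_indicator₀ (hlaw.aemeasurable_snd.nullMeasurable hS)).symm
    _ = 0 := integral_eq_zero_of_identDistrib_neg hneg

theorem stmt0_general [CompleteSpace F] (hX : AEMeasurable X μ) (hXY : X ⟂ᵢ[μ] Y)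
    (hY : IdentDistrib (fun ω ↦ pointReflection c (Y ω)) Y μ μ) (hS : MeasurableSet S)
    (hSc : ∀ x y, (x, pointReflection c y) ∈ S ↔ (x, y) ∈ S)
    (hint : IntegrableOn Y {ω | (X ω, Y ω) ∈ S} μ) :
    ∫ ω in {ω | (X ω, Y ω) ∈ S}, Y ω ∂μ = μ.real {ω | (X ω, Y ω) ∈ S} • c ∧
      (μ {ω | (X ω, Y ω) ∈ S} ≠ 0 → ⨍ ω in {ω | (X ω, Y ω) ∈ S}, Y ω ∂μ = c) := by
  have hexp : ∫ ω in {ω | (X ω, Y ω) ∈ S}, Y ω ∂μ = μ.real {ω | (X ω, Y ω) ∈ S} • c := by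
    have hzero := setIntegral_sub_eq_zero_of_pointReflection_invariant hX hXY hY hS hSc
    rwa [integral_sub hint (integrable_const c), setIntegral_const, sub_eq_zero] at hzero
  refine ⟨hexp, fun hpos ↦ ?_⟩
  rw [setAverage_eq, hexp, inv_smul_smul₀ ((measureReal_ne_zero_iff (measure_ne_top _ _)).2 hpos)]

end SymmetricEvent

/-- Let `X₁` and `X₂` be independent real-valued random variables with
probability density functions `f₁` and `f₂`, where `f₂` is symmetric about its mean `μ₂`
and `X₂` is integrable. Then for every `w ∈ (0,1)` and every `μ₁ ∈ ℝ`,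
`E[X₂ · 1{(1−w)(X₂−μ₂)² < w(X₁−μ₁)²}] = μ₂ · P((1−w)(X₂−μ₂)² < w(X₁−μ₁)²)`.
Consequently, conditioned on that event (when it has positive probability), the conditional
expectation of `X₂` equals `μ₂`. -/
theorem stmt0 {Ω : Type*} [MeasurableSpace Ω] (μ : Measure Ω) [IsProbabilityMeasure μ]
    (X₁ X₂ : Ω → ℝ) (hX₁ : Measurable X₁) (hX₂ : Measurable X₂)
    (hindep : ProbabilityTheory.IndepFun X₁ X₂ μ)
    (f₁ f₂ : ℝ → ℝ) (hf₁0 : ∀ x, 0 ≤ f₁ x) (hf₂0 : ∀ x, 0 ≤ f₂ x)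
    (hX₁pdf : μ.map X₁ = volume.withDensity fun x => ENNReal.ofReal (f₁ x))
    (hX₂pdf : μ.map X₂ = volume.withDensity fun x => ENNReal.ofReal (f₂ x))
    (μ₂ : ℝ) (hsym : ∀ t, f₂ (μ₂ + t) = f₂ (μ₂ - t))
    (hint : Integrable X₂ μ)
    (w : ℝ) (hw : w ∈ Set.Ioo (0 : ℝ) 1) (μ₁ : ℝ) :
    (∫ ω in {ω | (1 - w) * (X₂ ω - μ₂) ^ 2 < w * (X₁ ω - μ₁) ^ 2}, X₂ ω ∂μ) =
        μ₂ * (μ {ω | (1 - w) * (X₂ ω - μ₂) ^ 2 < w * (X₁ ω - μ₁) ^ 2}).toReal ∧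
      (μ {ω | (1 - w) * (X₂ ω - μ₂) ^ 2 < w * (X₁ ω - μ₁) ^ 2} ≠ 0 →
        (∫ ω in {ω | (1 - w) * (X₂ ω - μ₂) ^ 2 < w * (X₁ ω - μ₁) ^ 2}, X₂ ω ∂μ) /
            (μ {ω | (1 - w) * (X₂ ω - μ₂) ^ 2 < w * (X₁ ω - μ₁) ^ 2}).toReal = μ₂) := by
  have hY : IdentDistrib (fun ω ↦ pointReflection μ₂ (X₂ ω)) X₂ μ μ :=
    identDistrib_pointReflection_of_map_eq_withDensity hX₂.aemeasurable hX₂pdf fun t ↦ by rw [hsym]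
  simpa [setAverage_eq, measureReal_def, div_eq_inv_mul, mul_comm μ₂] using
    stmt0_general (S := {p | (1 - w) * (p.2 - μ₂) ^ 2 < w * (p.1 - μ₁) ^ 2}) hX₁.aemeasurable
      hindep hY (measurableSet_lt (by fun_prop) (by fun_prop))
      (fun x y ↦ by simp [pointReflection_apply, sub_sq_comm μ₂ y]) hint.integrableOn
end

section
/- The function H is strictly monotone increasing on (0,1): for all 0 < w < w′ < 1, H(w) < H(w′). -/
open MeasureTheory Set

/-- `Hfun f₁ f₂ w = E[X₂² · 1{(1−w)X₂² < wX₁²}]` for independent `X₁ ∼ f₁`, `X₂ ∼ f₂`,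
written as a double integral against the product density. -/
noncomputable def Hfun (f₁ f₂ : ℝ → ℝ) (w : ℝ) : ℝ :=
  ∫ x₁ : ℝ, (∫ x₂ : ℝ, (if (1 - w) * x₂ ^ 2 < w * x₁ ^ 2 then x₂ ^ 2 else 0) * f₂ x₂) * f₁ x₁

/-- `Gfun f₁ f₂ w = E[X₁² · 1{(1−w)X₂² ≥ wX₁²}]` for independent `X₁ ∼ f₁`, `X₂ ∼ f₂`,
written as a double integral against the product density. -/
noncomputable def Gfun (f₁ f₂ : ℝ → ℝ) (w : ℝ) : ℝ :=
  ∫ x₁ : ℝ, (∫ x₂ : ℝ, (if w * x₁ ^ 2 ≤ (1 - w) * x₂ ^ 2 then x₁ ^ 2 else 0) * f₂ x₂) * f₁ x₁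

/-- The receiver's expected loss `L(w ∣ θ) = θ·G(w) + (1−θ)·H(w)`. -/
noncomputable def Lfun (f₁ f₂ : ℝ → ℝ) (w θ : ℝ) : ℝ :=
  θ * Gfun f₁ f₂ w + (1 - θ) * Hfun f₁ f₂ w

/-- A probability density on `ℝ` that is continuous, everywhere positive, symmetric about `0`,
and has a finite second moment. -/
def GoodDensity (f : ℝ → ℝ) : Prop :=
  Continuous f ∧ (∀ x, 0 < f x) ∧ (∀ x, f (-x) = f x) ∧
    (∫ x : ℝ, f x) = 1 ∧ Integrable fun x : ℝ => x ^ 2 * f x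

/-!
Since `(1 - w) * y ^ 2 < w * x ^ 2` says `y ^ 2 < w * (x ^ 2 + y ^ 2)`, the value `H w` is, by
Fubini, the integral of `f₁ x * (y ^ 2 * f₂ y)` over a planar cone that grows with `w`. For `w < w'`
the difference of the two cones meets every vertical line other than the `y`-axis in a set with
nonempty interior, on which `y ^ 2 * f₂ y` is almost everywhere positive; hence the integral over
the difference is positive.
-/

section ProductIntegral

variable {α β : Type*} [MeasurableSpace α] [MeasurableSpace β] {μ : Measure α} {ν : Measure β}
  {f : α → ℝ} {g : β → ℝ}

lemma mul_prod_nonneg_ae (hf : 0 ≤ᵐ[μ] f) (hg : 0 ≤ᵐ[ν] g) :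
    0 ≤ᵐ[μ.prod ν] fun p ↦ f p.1 * g p.2 := by
  filter_upwards [Measure.quasiMeasurePreserving_fst.ae hf,
    Measure.quasiMeasurePreserving_snd.ae hg] with p hfp hgp
  exact mul_nonneg hfp hgp

lemma setIntegral_mul_prod_pos [SFinite μ] [SFinite ν] {s : Set (α × β)} (hs : MeasurableSet s)
    (hfi : Integrable f μ) (hf : 0 ≤ᵐ[μ] f) (hf₀ : ¬ f =ᵐ[μ] 0)
    (hgi : Integrable g ν) (hg : ∀ᵐ y ∂ν, 0 < g y)
    (hsec : ∀ᵐ x ∂μ, ν (Prod.mk x ⁻¹' s) ≠ 0) :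
    0 < ∫ p in s, f p.1 * g p.2 ∂μ.prod ν := by
  have hnonneg := ae_restrict_of_ae (s := s) (mul_prod_nonneg_ae hf (hg.mono fun _ h ↦ h.le))
  refine (integral_nonneg_of_ae hnonneg).lt_of_ne' fun hzero ↦ hf₀ ?_
  have hvanish : ∀ᵐ p ∂μ.prod ν, p ∈ s → f p.1 * g p.2 = 0 :=
    (ae_restrict_iff' hs).1 <|
      (setIntegral_eq_zero_iff_of_nonneg_ae hnonneg (hfi.mul_prod hgi).integrableOn).1 hzero
  filter_upwards [Measure.ae_ae_of_ae_prod hvanish, hsec] with x hx hsecx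
  by_contra hfx
  refine hsecx (measure_eq_zero_iff_ae_notMem.2 ?_)
  filter_upwards [hx, hg] with y hy hgy hmem
  exact mul_ne_zero hfx hgy.ne' (hy hmem)

end ProductIntegral

/-- For `0 < w < 1`, an open double cone around the `x`-axis: the event `(1 - w) X₂² < w X₁²` in
the plane of values of `(X₁, X₂)`, with the inequality rearranged so that its monotonicity in `w`
is visible. -/
def horizontalCone (w : ℝ) : Set (ℝ × ℝ) :=
  {p | p.2 ^ 2 < w * (p.1 ^ 2 + p.2 ^ 2)}

lemma mk_mem_horizontalCone_iff {w x y : ℝ} :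
    (x, y) ∈ horizontalCone w ↔ (1 - w) * y ^ 2 < w * x ^ 2 := by
  simp only [horizontalCone, mem_ofPred_eq]
  constructor <;> intro h <;> linarith

lemma isOpen_horizontalCone (w : ℝ) : IsOpen (horizontalCone w) :=
  isOpen_lt (by fun_prop) (by fun_prop)

lemma monotone_horizontalCone : Monotone horizontalCone := fun _ _ hw p hp ↦
  hp.out.trans_le (mul_le_mul_of_nonneg_right hw (by positivity))

lemma exists_sq_eq_mul_add_sq {m : ℝ} (hm₀ : 0 ≤ m) (hm₁ : m < 1) (x : ℝ) :
    ∃ y : ℝ, y ^ 2 = m * (x ^ 2 + y ^ 2) := by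
  have hpos : 0 < 1 - m := sub_pos.2 hm₁
  refine ⟨√(m * x ^ 2 / (1 - m)), ?_⟩
  rw [Real.sq_sqrt (by positivity)]
  field_simp
  ring

lemma measure_preimage_horizontalCone_diff_ne_zero {ν : Measure ℝ} [ν.IsOpenPosMeasure]
    {w w' x : ℝ} (hw : 0 ≤ w) (hww' : w < w') (hw' : w' ≤ 1) (hx : x ≠ 0) :
    ν (Prod.mk x ⁻¹' (horizontalCone w' \ horizontalCone w)) ≠ 0 := by
  let U : Set ℝ := {y | w * (x ^ 2 + y ^ 2) < y ^ 2 ∧ y ^ 2 < w' * (x ^ 2 + y ^ 2)}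
  have hU : IsOpen U :=
    (isOpen_lt (by fun_prop) (by fun_prop)).and (isOpen_lt (by fun_prop) (by fun_prop))
  have hUne : U.Nonempty := by
    obtain ⟨m, hwm, hmw'⟩ := exists_between hww'
    obtain ⟨y, hy⟩ := exists_sq_eq_mul_add_sq (hw.trans hwm.le) (hmw'.trans_le hw') x
    have hnorm : 0 < x ^ 2 + y ^ 2 := by positivity
    exact ⟨y, (mul_lt_mul_of_pos_right hwm hnorm).trans_eq hy.symm,
      hy.trans_lt (mul_lt_mul_of_pos_right hmw' hnorm)⟩
  have hsub : U ⊆ Prod.mk x ⁻¹' (horizontalCone w' \ horizontalCone w) :=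
    fun _ hy ↦ ⟨hy.2, hy.1.not_gt⟩
  exact fun hzero ↦ hU.measure_ne_zero ν hUne (measure_mono_null hsub hzero)

lemma Hfun_eq_setIntegral {f₁ f₂ : ℝ → ℝ} (hf₁ : Integrable f₁)
    (hf₂ : Integrable fun y ↦ y ^ 2 * f₂ y) (w : ℝ) :
    Hfun f₁ f₂ w = ∫ p in horizontalCone w, f₁ p.1 * (p.2 ^ 2 * f₂ p.2) := by
  have hcone := (isOpen_horizontalCone w).measurableSet
  have hindicator (x y : ℝ) :
      (if (1 - w) * y ^ 2 < w * x ^ 2 then y ^ 2 else 0) * f₂ y * f₁ x =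
        (horizontalCone w).indicator (fun p ↦ f₁ p.1 * (p.2 ^ 2 * f₂ p.2)) (x, y) := by
    simp only [indicator, mk_mem_horizontalCone_iff]
    split_ifs <;> ring
  simp only [Hfun, ← integral_mul_const, hindicator]
  rw [← integral_prod _ ((hf₁.mul_prod hf₂).indicator hcone), ← Measure.volume_eq_prod,
    integral_indicator hcone]

theorem stmt5_general {f₁ f₂ : ℝ → ℝ} (hf₁ : Integrable f₁) (hf₁_nonneg : 0 ≤ᵐ[volume] f₁)
    (hf₁_ne : ¬ f₁ =ᵐ[volume] 0) (hf₂ : Integrable fun y ↦ y ^ 2 * f₂ y)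
    (hf₂_pos : ∀ᵐ y, 0 < f₂ y) : StrictMonoOn (Hfun f₁ f₂) (Icc 0 1) := by
  intro w hw w' hw' hww'
  have hcone (v : ℝ) := (isOpen_horizontalCone v).measurableSet
  have hint : IntegrableOn (fun p : ℝ × ℝ ↦ f₁ p.1 * (p.2 ^ 2 * f₂ p.2)) (horizontalCone w') :=
    (hf₁.mul_prod hf₂).integrableOn
  have hmoment_pos : ∀ᵐ y : ℝ, 0 < y ^ 2 * f₂ y := by
    filter_upwards [hf₂_pos, Measure.ae_ne volume 0] with y hpos hy
    positivity
  rw [Hfun_eq_setIntegral hf₁ hf₂, Hfun_eq_setIntegral hf₁ hf₂, ← sub_pos,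
    ← setIntegral_sdiff (hcone w) hint (monotone_horizontalCone hww'.le)]
  refine setIntegral_mul_prod_pos ((hcone w').diff (hcone w)) hf₁ hf₁_nonneg hf₁_ne hf₂
    hmoment_pos ?_
  filter_upwards [Measure.ae_ne volume 0] with x hx
  exact measure_preimage_horizontalCone_diff_ne_zero hw.1 hww' hw'.2 hx

lemma GoodDensity.integrable {f : ℝ → ℝ} (hf : GoodDensity f) : Integrable f :=
  .of_integral_ne_zero (hf.2.2.2.1.trans_ne one_ne_zero)

lemma GoodDensity.not_ae_eq_zero {f : ℝ → ℝ} (hf : GoodDensity f) : ¬ f =ᵐ[volume] 0 :=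
  fun h ↦ let ⟨x, hx⟩ := h.exists; (hf.2.1 x).ne' hx

/-- `H` is strictly monotone increasing on `(0,1)`:
for all `0 < w < w′ < 1`, `H(w) < H(w′)`. -/
theorem stmt5 (f₁ f₂ : ℝ → ℝ) (hf₁ : GoodDensity f₁) (hf₂ : GoodDensity f₂) :
    ∀ w w' : ℝ, 0 < w → w < w' → w' < 1 → Hfun f₁ f₂ w < Hfun f₁ f₂ w' :=
  fun _ _ h₀ h h₁ ↦ stmt5_general hf₁.integrable (.of_forall fun x ↦ (hf₁.2.1 x).le)
    hf₁.not_ae_eq_zero hf₂.2.2.2.2 (.of_forall hf₂.2.1)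
    ⟨h₀.le, (h.trans h₁).le⟩ ⟨(h₀.trans h).le, h₁.le⟩ h
end

section
/- For any two weights 0 < w < w′ < 1 there exists a unique indifference threshold θ* ∈ (w, w′) such that L(w | θ*) = L(w′ | θ*). Moreover, for all θ < θ* one has L(w | θ) < L(w′ | θ), and for all θ > θ* one has L(w | θ) > L(w′ | θ). -/
open MeasureTheory Set

/-!
Put `s = c₁ + c₂` for the two possible losses. The rule of weight `w` pays `c₂` exactly where
`c₂ < w s`, so raising the weight from `w` to `w'` changes what is paid only on the wedge
`D = {w s ≤ c₂ < w' s}`, where `c₁` is replaced by `c₂`. Hence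
`L(w' ∣ θ) - L(w ∣ θ) = ∫_D ((1 - θ) c₂ - θ c₁) = ∫_D c₂ - θ ∫_D s`,
which is affine in `θ` and vanishes at `θ* = ∫_D c₂ / ∫_D s`. The inequalities defining `D`
integrate to `w < θ* < w'`.
-/

section Threshold

variable {Ω : Type*} {c₁ c₂ : Ω → ℝ} {w w' : ℝ}

/-- The event that the decision rule of weight `w` incurs the loss `c₂` instead of `c₁`. For
`cᵢ = Xᵢ²` it is `{(1 - w) X₂² < w X₁²}`, rearranged so that `w` occurs on one side only. -/
def paysSecond (c₁ c₂ : Ω → ℝ) (w : ℝ) : Set Ω :=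
  {ω | c₂ ω < w * (c₁ ω + c₂ ω)}

/-- The event on which the rules of weights `w ≤ w'` decide differently. -/
def wedge (c₁ c₂ : Ω → ℝ) (w w' : ℝ) : Set Ω :=
  paysSecond c₁ c₂ w' \ paysSecond c₁ c₂ w

lemma paysSecond_mono (hc : ∀ ω, 0 ≤ c₁ ω + c₂ ω) : Monotone (paysSecond c₁ c₂) :=
  fun _ _ hww' ω hω => lt_of_lt_of_le hω (mul_le_mul_of_nonneg_right hww' (hc ω))

variable [MeasurableSpace Ω] {μ : Measure Ω}

/-- The expected loss of the decision rule of weight `w`, when `c₁` counts with factor `θ` and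
`c₂` with factor `1 - θ`. -/
noncomputable def expectedLoss (μ : Measure Ω) (c₁ c₂ : Ω → ℝ) (w θ : ℝ) : ℝ :=
  θ * ∫ ω in (paysSecond c₁ c₂ w)ᶜ, c₁ ω ∂μ + (1 - θ) * ∫ ω in paysSecond c₁ c₂ w, c₂ ω ∂μ

lemma nullMeasurableSet_paysSecond (h₁ : AEMeasurable c₁ μ) (h₂ : AEMeasurable c₂ μ) (w : ℝ) :
    NullMeasurableSet (paysSecond c₁ c₂ w) μ :=
  nullMeasurableSet_lt h₂ ((h₁.add h₂).const_mul w)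

lemma nullMeasurableSet_wedge (h₁ : AEMeasurable c₁ μ) (h₂ : AEMeasurable c₂ μ) (w w' : ℝ) :
    NullMeasurableSet (wedge c₁ c₂ w w') μ :=
  (nullMeasurableSet_paysSecond h₁ h₂ w').diff (nullMeasurableSet_paysSecond h₁ h₂ w)

lemma expectedLoss_eq_add_setIntegral (h₁ : Integrable c₁ μ) (h₂ : Integrable c₂ μ) (w θ : ℝ) :
    expectedLoss μ c₁ c₂ w θ =
      θ * ∫ ω, c₁ ω ∂μ + ∫ ω in paysSecond c₁ c₂ w, (c₂ ω - θ * (c₁ ω + c₂ ω)) ∂μ := by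
  have hA := nullMeasurableSet_paysSecond h₁.aemeasurable h₂.aemeasurable w
  have hs : Integrable (fun ω => c₁ ω + c₂ ω) μ := h₁.add h₂
  rw [expectedLoss, setIntegral_compl₀ hA h₁,
    integral_sub h₂.integrableOn (hs.const_mul θ).integrableOn, integral_const_mul,
    integral_add h₁.integrableOn h₂.integrableOn]
  ring

lemma expectedLoss_sub_expectedLoss (h₁ : Integrable c₁ μ) (h₂ : Integrable c₂ μ)
    (hc : ∀ ω, 0 ≤ c₁ ω + c₂ ω) (hww' : w ≤ w') (θ : ℝ) :
    expectedLoss μ c₁ c₂ w' θ - expectedLoss μ c₁ c₂ w θ =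
      ∫ ω in wedge c₁ c₂ w w', c₂ ω ∂μ - θ * ∫ ω in wedge c₁ c₂ w w', (c₁ ω + c₂ ω) ∂μ := by
  have hA := nullMeasurableSet_paysSecond h₁.aemeasurable h₂.aemeasurable w
  have hs : Integrable (fun ω => θ * (c₁ ω + c₂ ω)) μ := (h₁.add h₂).const_mul θ
  have hd : Integrable (fun ω => c₂ ω - θ * (c₁ ω + c₂ ω)) μ := h₂.sub hs
  rw [expectedLoss_eq_add_setIntegral h₁ h₂, expectedLoss_eq_add_setIntegral h₁ h₂,
    add_sub_add_left_eq_sub, ← setIntegral_sdiff₀ hA hd.integrableOn (paysSecond_mono hc hww'),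
    ← integral_const_mul, ← integral_sub h₂.integrableOn hs.integrableOn, wedge]

lemma setIntegral_lt_setIntegral {f g : Ω → ℝ} {s : Set Ω} (hs : NullMeasurableSet s μ)
    (hf : IntegrableOn f s μ) (hg : IntegrableOn g s μ) (hle : ∀ ω ∈ s, f ω ≤ g ω)
    (hlt : μ {ω ∈ s | f ω < g ω} ≠ 0) :
    ∫ ω in s, f ω ∂μ < ∫ ω in s, g ω ∂μ := by
  have hnonneg : 0 ≤ᵐ[μ.restrict s] fun ω => g ω - f ω :=
    (ae_restrict_iff'₀ hs).2 (.of_forall fun ω hω => sub_nonneg.2 (hle ω hω))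
  rw [← sub_pos, ← integral_sub hg hf,
    setIntegral_pos_iff_support_of_nonneg_ae hnonneg (hg.sub hf)]
  exact hlt.bot_lt.trans_le (measure_mono fun ω hω => ⟨(sub_pos.2 hω.2).ne', hω.1⟩)

lemma setIntegral_wedge_mem_Ioo (h₁ : Integrable c₁ μ) (h₂ : Integrable c₂ μ)
    (hpos : μ {ω | c₂ ω ∈ Ioo (w * (c₁ ω + c₂ ω)) (w' * (c₁ ω + c₂ ω))} ≠ 0) :
    ∫ ω in wedge c₁ c₂ w w', c₂ ω ∂μ ∈
      Ioo (w * ∫ ω in wedge c₁ c₂ w w', (c₁ ω + c₂ ω) ∂μ)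
        (w' * ∫ ω in wedge c₁ c₂ w w', (c₁ ω + c₂ ω) ∂μ) := by
  have hD := nullMeasurableSet_wedge h₁.aemeasurable h₂.aemeasurable w w'
  have hs (v : ℝ) : IntegrableOn (fun ω => v * (c₁ ω + c₂ ω)) (wedge c₁ c₂ w w') μ :=
    ((h₁.add h₂).const_mul v).integrableOn
  simp only [← integral_const_mul]
  constructor
  · exact setIntegral_lt_setIntegral hD (hs w) h₂.integrableOn (fun ω hω => not_lt.1 hω.2)
      (mt (measure_mono_null fun ω hω => ⟨⟨hω.2, hω.1.not_gt⟩, hω.1⟩) hpos)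
  · exact setIntegral_lt_setIntegral hD h₂.integrableOn (hs w') (fun ω hω => le_of_lt hω.1)
      (mt (measure_mono_null fun ω hω => ⟨⟨hω.2, hω.1.not_gt⟩, hω.2⟩) hpos)

theorem exists_threshold_expectedLoss (h₁ : Integrable c₁ μ) (h₂ : Integrable c₂ μ)
    (hc : ∀ ω, 0 ≤ c₁ ω + c₂ ω) (hww' : w < w')
    (hpos : μ {ω | c₂ ω ∈ Ioo (w * (c₁ ω + c₂ ω)) (w' * (c₁ ω + c₂ ω))} ≠ 0) :
    ∃ θs ∈ Ioo w w', ∀ θ,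
      (expectedLoss μ c₁ c₂ w θ = expectedLoss μ c₁ c₂ w' θ ↔ θ = θs) ∧
      (expectedLoss μ c₁ c₂ w θ < expectedLoss μ c₁ c₂ w' θ ↔ θ < θs) ∧
      (expectedLoss μ c₁ c₂ w' θ < expectedLoss μ c₁ c₂ w θ ↔ θs < θ) := by
  obtain ⟨hlow, hupp⟩ := setIntegral_wedge_mem_Ioo h₁ h₂ hpos
  have hdiff := expectedLoss_sub_expectedLoss h₁ h₂ hc hww'.le
  set C := ∫ ω in wedge c₁ c₂ w w', c₂ ω ∂μ
  set S := ∫ ω in wedge c₁ c₂ w w', (c₁ ω + c₂ ω) ∂μ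
  have hS : 0 < S := by
    have : 0 < (w' - w) * S := by linarith
    exact pos_of_mul_pos_right this (sub_nonneg.2 hww'.le)
  refine ⟨C / S, ⟨(lt_div_iff₀ hS).2 hlow, (div_lt_iff₀ hS).2 hupp⟩, fun θ => ⟨?_, ?_, ?_⟩⟩
  · rw [eq_comm, ← sub_eq_zero, hdiff, sub_eq_zero, eq_div_iff hS.ne', eq_comm]
  · rw [← sub_pos, hdiff, sub_pos, lt_div_iff₀ hS]
  · rw [← sub_neg, hdiff, sub_neg, div_lt_iff₀ hS]

end Threshold

lemma measure_sq_mem_Ioo_ne_zero {μ : Measure (ℝ × ℝ)} [μ.IsOpenPosMeasure] {w w' : ℝ}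
    (hww' : w < w') (hw : w < 1) (hw' : 0 < w') :
    μ {z | z.2 ^ 2 ∈ Ioo (w * (z.1 ^ 2 + z.2 ^ 2)) (w' * (z.1 ^ 2 + z.2 ^ 2))} ≠ 0 := by
  obtain ⟨t, ht, ht'⟩ : ∃ t, max w 0 < t ∧ t < min w' 1 :=
    exists_between (max_lt (lt_min hww' hw) (lt_min hw' one_pos))
  rw [max_lt_iff] at ht
  rw [lt_min_iff] at ht'
  have hopen : IsOpen {z : ℝ × ℝ |
      z.2 ^ 2 ∈ Ioo (w * (z.1 ^ 2 + z.2 ^ 2)) (w' * (z.1 ^ 2 + z.2 ^ 2))} :=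
    (isOpen_lt (by fun_prop) (by fun_prop)).and (isOpen_lt (by fun_prop) (by fun_prop))
  refine hopen.measure_ne_zero μ ⟨(√(1 - t), √t), ?_⟩
  simp only [mem_ofPred_eq, Real.sq_sqrt (sub_nonneg.2 ht'.2.le), Real.sq_sqrt ht.2.le,
    sub_add_cancel, mul_one]
  exact ⟨ht.1, ht'.1⟩

section Density

variable {α β : Type*} [MeasureSpace α] [MeasureSpace β]

/-- The law with density `f` with respect to `volume`. Negative values of `f` are replaced
by `0`. -/
noncomputable def densityLaw (f : α → ℝ) : Measure α :=
  volume.withDensity fun x => ENNReal.ofReal (f x)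

instance [SFinite (volume : Measure α)] (f : α → ℝ) : SFinite (densityLaw f) := by
  unfold densityLaw
  infer_instance

lemma isFiniteMeasure_densityLaw {f : α → ℝ} (hf : Integrable f) :
    IsFiniteMeasure (densityLaw f) :=
  isFiniteMeasure_withDensity_ofReal hf.hasFiniteIntegral

lemma isOpenPosMeasure_densityLaw [TopologicalSpace α] [(volume : Measure α).IsOpenPosMeasure]
    {f : α → ℝ} (hf : AEMeasurable f) (hf₀ : ∀ᵐ x, 0 < f x) :
    (densityLaw f).IsOpenPosMeasure := by
  have hne : ∀ᵐ x, ENNReal.ofReal (f x) ≠ 0 :=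
    hf₀.mono fun x hx => (ENNReal.ofReal_pos.2 hx).ne'
  exact (withDensity_absolutelyContinuous' hf.ennreal_ofReal hne).isOpenPosMeasure

lemma integral_densityLaw {f : α → ℝ} (hf : AEMeasurable f) (hf₀ : 0 ≤ᵐ[volume] f) (g : α → ℝ) :
    ∫ x, g x ∂densityLaw f = ∫ x, g x * f x := by
  rw [densityLaw, integral_withDensity_eq_integral_toReal_smul₀ hf.ennreal_ofReal
    (.of_forall fun _ => ENNReal.ofReal_lt_top)]
  refine integral_congr_ae (hf₀.mono fun x hx => ?_)
  simp only [ENNReal.toReal_ofReal hx, smul_eq_mul, mul_comm]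

lemma integrable_densityLaw {f g : α → ℝ} (hf : AEMeasurable f) (hf₀ : 0 ≤ᵐ[volume] f)
    (hg : Integrable fun x => g x * f x) : Integrable g (densityLaw f) := by
  rw [densityLaw, integrable_withDensity_iff_integrable_smul₀' hf.ennreal_ofReal
    (.of_forall fun _ => ENNReal.ofReal_lt_top)]
  refine hg.congr (hf₀.mono fun x hx => ?_)
  simp only [ENNReal.toReal_ofReal hx, smul_eq_mul, mul_comm]

lemma setIntegral_prod_densityLaw [SFinite (volume : Measure α)] [SFinite (volume : Measure β)]
    {f₁ : α → ℝ} {f₂ : β → ℝ} (hf₁ : AEMeasurable f₁) (hf₁₀ : 0 ≤ᵐ[volume] f₁)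
    (hf₂ : AEMeasurable f₂) (hf₂₀ : 0 ≤ᵐ[volume] f₂) {s : Set (α × β)} (hs : MeasurableSet s)
    {g : α × β → ℝ} (hg : Integrable g ((densityLaw f₁).prod (densityLaw f₂))) :
    ∫ z in s, g z ∂(densityLaw f₁).prod (densityLaw f₂) =
      ∫ x, (∫ y, s.indicator g (x, y) * f₂ y) * f₁ x := by
  rw [← integral_indicator hs, integral_prod _ (hg.indicator hs), integral_densityLaw hf₁ hf₁₀]
  simp only [integral_densityLaw hf₂ hf₂₀]

lemma Lfun_eq_expectedLoss {f₁ f₂ : ℝ → ℝ} (hf₁ : AEMeasurable f₁) (hf₁₀ : 0 ≤ᵐ[volume] f₁)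
    (hf₂ : AEMeasurable f₂) (hf₂₀ : 0 ≤ᵐ[volume] f₂)
    (h₁ : Integrable (fun z => z.1 ^ 2) ((densityLaw f₁).prod (densityLaw f₂)))
    (h₂ : Integrable (fun z => z.2 ^ 2) ((densityLaw f₁).prod (densityLaw f₂))) (w θ : ℝ) :
    Lfun f₁ f₂ w θ = expectedLoss ((densityLaw f₁).prod (densityLaw f₂))
      (fun z => z.1 ^ 2) (fun z => z.2 ^ 2) w θ := by
  have hA : MeasurableSet (paysSecond (fun z : ℝ × ℝ => z.1 ^ 2) (fun z => z.2 ^ 2) w) :=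
    measurableSet_lt (by fun_prop) (by fun_prop)
  have hrule (a b : ℝ) : b < w * (a + b) ↔ (1 - w) * b < w * a := by
    constructor <;> intro h <;> linarith
  rw [expectedLoss, setIntegral_prod_densityLaw hf₁ hf₁₀ hf₂ hf₂₀ hA.compl h₁,
    setIntegral_prod_densityLaw hf₁ hf₁₀ hf₂ hf₂₀ hA h₂]
  simp only [Lfun, Gfun, Hfun, paysSecond, indicator_apply, mem_compl_iff, mem_ofPred_eq, hrule,
    not_lt]

end Density

theorem stmt10_general {f₁ f₂ : ℝ → ℝ} (hf₁ : Integrable f₁) (hf₁₀ : ∀ᵐ x, 0 < f₁ x)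
    (hf₁₂ : Integrable fun x => x ^ 2 * f₁ x) (hf₂ : Integrable f₂) (hf₂₀ : ∀ᵐ x, 0 < f₂ x)
    (hf₂₂ : Integrable fun x => x ^ 2 * f₂ x) {w w' : ℝ} (hww' : w < w') (hw : w < 1)
    (hw' : 0 < w') :
    ∃ θs ∈ Ioo w w', ∀ θ,
      (Lfun f₁ f₂ w θ = Lfun f₁ f₂ w' θ ↔ θ = θs) ∧
      (Lfun f₁ f₂ w θ < Lfun f₁ f₂ w' θ ↔ θ < θs) ∧
      (Lfun f₁ f₂ w' θ < Lfun f₁ f₂ w θ ↔ θs < θ) := by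
  have hm₁ := hf₁.aemeasurable
  have hm₂ := hf₂.aemeasurable
  have hn₁ : 0 ≤ᵐ[volume] f₁ := hf₁₀.mono fun _ => le_of_lt
  have hn₂ : 0 ≤ᵐ[volume] f₂ := hf₂₀.mono fun _ => le_of_lt
  have := isFiniteMeasure_densityLaw hf₁
  have := isFiniteMeasure_densityLaw hf₂
  have := isOpenPosMeasure_densityLaw hm₁ hf₁₀
  have := isOpenPosMeasure_densityLaw hm₂ hf₂₀
  have h₁ : Integrable (fun z : ℝ × ℝ => z.1 ^ 2) ((densityLaw f₁).prod (densityLaw f₂)) :=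
    (integrable_densityLaw hm₁ hn₁ hf₁₂).comp_fst _
  have h₂ : Integrable (fun z : ℝ × ℝ => z.2 ^ 2) ((densityLaw f₁).prod (densityLaw f₂)) :=
    (integrable_densityLaw hm₂ hn₂ hf₂₂).comp_snd _
  simp only [Lfun_eq_expectedLoss hm₁ hn₁ hm₂ hn₂ h₁ h₂]
  exact exists_threshold_expectedLoss h₁ h₂ (fun z => by positivity) hww'
    (measure_sq_mem_Ioo_ne_zero hww' hw hw')

lemma GoodDensity.ae_pos {f : ℝ → ℝ} (hf : GoodDensity f) : ∀ᵐ x, 0 < f x :=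
  .of_forall hf.2.1

lemma GoodDensity.integrable_sq_mul {f : ℝ → ℝ} (hf : GoodDensity f) :
    Integrable fun x => x ^ 2 * f x :=
  hf.2.2.2.2

/-- For any two weights `0 < w < w′ < 1` there exists a unique
indifference threshold `θ* ∈ (w, w′)` with `L(w∣θ*) = L(w′∣θ*)`. Moreover, for
`θ ∈ [0,1]` with `θ < θ*` one has `L(w∣θ) < L(w′∣θ)`, and for `θ > θ*` one has
`L(w∣θ) > L(w′∣θ)`. -/
theorem stmt10 (f₁ f₂ : ℝ → ℝ) (hf₁ : GoodDensity f₁) (hf₂ : GoodDensity f₂)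
    (w w' : ℝ) (hw : 0 < w) (hww' : w < w') (hw' : w' < 1) :
    ∃ θs : ℝ, θs ∈ Set.Ioo w w' ∧ Lfun f₁ f₂ w θs = Lfun f₁ f₂ w' θs ∧
      (∀ θ ∈ Set.Ioo w w', Lfun f₁ f₂ w θ = Lfun f₁ f₂ w' θ → θ = θs) ∧
      (∀ θ ∈ Set.Icc (0 : ℝ) 1, θ < θs → Lfun f₁ f₂ w θ < Lfun f₁ f₂ w' θ) ∧
      (∀ θ ∈ Set.Icc (0 : ℝ) 1, θs < θ → Lfun f₁ f₂ w' θ < Lfun f₁ f₂ w θ) := by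
  obtain ⟨θs, hθs, h⟩ := stmt10_general hf₁.integrable hf₁.ae_pos hf₁.integrable_sq_mul
    hf₂.integrable hf₂.ae_pos hf₂.integrable_sq_mul hww' (hww'.trans hw') (hw.trans hww')
  exact ⟨θs, hθs, (h θs).1.2 rfl, fun θ _ => (h θ).1.1, fun θ _ => (h θ).2.1.2,
    fun θ _ => (h θ).2.2.2⟩
end

section
/- Let 0 < w₁ < ⋯ < wₙ < 1 be weights with associated indifference thresholds 0 = θ₀ < θ₁ < ⋯ < θₙ = 1 (where for interior m, θ_m ∈ (w_m, w_{m+1}) is the unique solution of L(w_m | θ_m) = L(w_{m+1} | θ_m)). Then the ex ante expected loss decomposes as 𝓛(w₁,…,wₙ) = Σ_{m=1}^{n} ∫_{θ_{m−1}}^{θ_m} L(w_m | θ) π(θ) dθ. -/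
open MeasureTheory Set

/-!
As `w` grows, the event `(1 - w) X₂² < w X₁²` grows, so `H` increases and `G` decreases. The loss
`L(w ∣ θ)` is affine in `θ` with slope `G(w) - H(w)`, so for `w ≤ w'` the difference
`L(w ∣ ·) - L(w' ∣ ·)` is nondecreasing: two consecutive losses cross once, at their indifference
threshold. Since the thresholds are ordered, for `θ` between `θ_{m-1}` and `θ_m` the losses decrease
along `w₁, …, w_m` and increase along `w_m, …, wₙ`, so the minimum is attained at `w_m`.
-/

/-- `f` single-crosses `g` from below at `c`: `f` is at most `g` up to `c` and at least `g` from `c`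
on. This is how the losses of two consecutive weights compare around an indifference threshold. -/
def SingleCrossingAt {α β : Type*} [LE α] [LE β] (f g : α → β) (c : α) : Prop :=
  (∀ t ≤ c, f t ≤ g t) ∧ ∀ t, c ≤ t → g t ≤ f t

lemma singleCrossingAt_of_monotone_sub {α β : Type*} [Preorder α] [AddCommGroup β] [PartialOrder β]
    [IsOrderedAddMonoid β] {f g : α → β} {c : α} (hmono : Monotone fun t => f t - g t)
    (hc : f c = g c) : SingleCrossingAt f g c := by
  have hzero : f c - g c = 0 := sub_eq_zero.2 hc
  exact ⟨fun t ht => sub_nonpos.1 ((hmono ht).trans_eq hzero),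
    fun t ht => sub_nonneg.1 (hzero.symm.trans_le (hmono ht))⟩

section LowerEnvelope

variable {α β : Type*} [Preorder α] {ℓ : ℕ → α → β} {c : ℕ → α} {n m : ℕ} {t : α}

lemma monotoneOn_Icc_of_singleCrossingAt [Preorder β] (hc : MonotoneOn c (Iic n))
    (hcross : ∀ k, 1 ≤ k → k < n → SingleCrossingAt (ℓ k) (ℓ (k + 1)) (c k))
    (hm : 1 ≤ m) (ht : t ≤ c m) : MonotoneOn (fun k => ℓ k t) (Icc m n) := by
  refine monotoneOn_of_le_add_one ordConnected_Icc fun k _ hk hk' => ?_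
  have hmk : c m ≤ c k := hc (hk.1.trans hk.2) hk.2 hk.1
  exact (hcross k (hm.trans hk.1) hk'.2).1 t (ht.trans hmk)

lemma antitoneOn_Icc_of_singleCrossingAt [Preorder β] (hc : MonotoneOn c (Iic n))
    (hcross : ∀ k, 1 ≤ k → k < n → SingleCrossingAt (ℓ k) (ℓ (k + 1)) (c k))
    (hm : m ≤ n) (ht : c (m - 1) ≤ t) : AntitoneOn (fun k => ℓ k t) (Icc 1 m) := by
  refine antitoneOn_of_add_one_le ordConnected_Icc fun k _ hk hk' => ?_
  have hkm : c k ≤ c (m - 1) :=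
    hc (hk.2.trans hm) ((m.sub_le 1).trans hm) (Nat.le_sub_one_of_lt hk'.2)
  exact (hcross k hk.1 (hk'.2.trans hm)).2 t (hkm.trans ht)

lemma inf'_Icc_eq_of_singleCrossingAt [SemilatticeInf β] (hc : MonotoneOn c (Iic n))
    (hcross : ∀ k, 1 ≤ k → k < n → SingleCrossingAt (ℓ k) (ℓ (k + 1)) (c k))
    (hm : m ∈ Finset.Icc 1 n) (ht : t ∈ Icc (c (m - 1)) (c m)) :
    (Finset.Icc 1 n).inf' ⟨m, hm⟩ (fun k => ℓ k t) = ℓ m t := by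
  obtain ⟨hm₁, hmn⟩ := Finset.mem_Icc.1 hm
  refine le_antisymm (Finset.inf'_le _ hm) (Finset.le_inf' _ _ fun k hk => ?_)
  obtain ⟨hk₁, hkn⟩ := Finset.mem_Icc.1 hk
  rcases le_total m k with hmk | hkm
  · exact monotoneOn_Icc_of_singleCrossingAt hc hcross hm₁ ht.2 ⟨le_rfl, hmn⟩ ⟨hmk, hkn⟩ hmk
  · exact antitoneOn_Icc_of_singleCrossingAt hc hcross hmn ht.1 ⟨hk₁, hkm⟩ ⟨hm₁, le_rfl⟩ hkm

end LowerEnvelope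

lemma intervalIntegral_eq_sum_Icc_of_eqOn {E : Type*} [NormedAddCommGroup E] [NormedSpace ℝ E]
    {μ : Measure ℝ} {F : ℝ → E} {f : ℕ → ℝ → E} {c : ℕ → ℝ} {n : ℕ}
    (hf : ∀ m ∈ Finset.Icc 1 n, IntervalIntegrable (f m) μ (c (m - 1)) (c m))
    (hfF : ∀ m ∈ Finset.Icc 1 n, EqOn (f m) F (uIcc (c (m - 1)) (c m))) :
    ∫ t in c 0..c n, F t ∂μ = ∑ m ∈ Finset.Icc 1 n, ∫ t in c (m - 1)..c m, f m t ∂μ := by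
  have hF (k : ℕ) (hk : k < n) : IntervalIntegrable F μ (c k) (c (k + 1)) := by
    have hmem : k + 1 ∈ Finset.Icc 1 n := Finset.mem_Icc.2 ⟨k.succ_pos, hk⟩
    exact (hf _ hmem).congr ((hfF _ hmem).mono uIoc_subset_uIcc)
  calc ∫ t in c 0..c n, F t ∂μ
      = ∑ k ∈ Finset.Ico 0 n, ∫ t in c (k + 1 - 1)..c (k + 1), F t ∂μ := by
        rw [← intervalIntegral.sum_integral_adjacent_intervals hF, Finset.range_eq_Ico]
        rfl
    _ = ∑ m ∈ Finset.Icc 1 n, ∫ t in c (m - 1)..c m, F t ∂μ := by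
        rw [Finset.sum_Ico_add' (fun m => ∫ t in c (m - 1)..c m, F t ∂μ), zero_add,
          Finset.Ico_add_one_right_eq_Icc]
    _ = ∑ m ∈ Finset.Icc 1 n, ∫ t in c (m - 1)..c m, f m t ∂μ :=
        Finset.sum_congr rfl fun m hm => intervalIntegral.integral_congr (hfF m hm).symm

lemma integral_integral_indicator_mul_mul {α β : Type*} [MeasurableSpace α] [MeasurableSpace β]
    {μ : Measure α} {ν : Measure β} [SFinite μ] [SFinite ν] {s : Set (α × β)}
    (hs : MeasurableSet s) {φ : α × β → ℝ} {f₁ : α → ℝ} {f₂ : β → ℝ}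
    (hφ : Integrable (fun z => φ z * f₂ z.2 * f₁ z.1) (μ.prod ν)) :
    ∫ x, (∫ y, s.indicator φ (x, y) * f₂ y ∂ν) * f₁ x ∂μ =
      ∫ z in s, φ z * f₂ z.2 * f₁ z.1 ∂μ.prod ν := by
  rw [← integral_indicator hs, integral_prod _ (hφ.indicator hs)]
  simp only [← integral_mul_const, indicator_mul_left]

/-- The event `(1−w)X₂² < wX₁²` of the loss `H(w)`, as a set of values of `(X₁, X₂)`; the event of
`G(w)` is its complement. -/
def dominanceRegion (w : ℝ) : Set (ℝ × ℝ) :=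
  {z | (1 - w) * z.2 ^ 2 < w * z.1 ^ 2}

lemma measurableSet_dominanceRegion (w : ℝ) : MeasurableSet (dominanceRegion w) :=
  measurableSet_lt (by fun_prop) (by fun_prop)

lemma monotone_dominanceRegion : Monotone dominanceRegion := by
  intro a b hab z (hz : (1 - a) * z.2 ^ 2 < a * z.1 ^ 2)
  calc (1 - b) * z.2 ^ 2 ≤ (1 - a) * z.2 ^ 2 := by gcongr
    _ < a * z.1 ^ 2 := hz
    _ ≤ b * z.1 ^ 2 := by gcongr

section Loss

variable {f₁ f₂ : ℝ → ℝ}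

lemma integrable_sq_snd_mul_mul (hi₁ : Integrable f₁) (hs₂ : Integrable fun x => x ^ 2 * f₂ x) :
    Integrable fun z : ℝ × ℝ => z.2 ^ 2 * f₂ z.2 * f₁ z.1 := by
  simpa only [mul_comm, Measure.volume_eq_prod] using hi₁.mul_prod hs₂

lemma integrable_sq_fst_mul_mul (hi₂ : Integrable f₂) (hs₁ : Integrable fun x => x ^ 2 * f₁ x) :
    Integrable fun z : ℝ × ℝ => z.1 ^ 2 * f₂ z.2 * f₁ z.1 := by
  simpa only [mul_right_comm, Measure.volume_eq_prod] using hs₁.mul_prod hi₂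

lemma Hfun_eq_setIntegral_s16 (hi₁ : Integrable f₁) (hs₂ : Integrable fun x => x ^ 2 * f₂ x) (w : ℝ) :
    Hfun f₁ f₂ w = ∫ z in dominanceRegion w, z.2 ^ 2 * f₂ z.2 * f₁ z.1 := by
  rw [Measure.volume_eq_prod, ← integral_integral_indicator_mul_mul
    (measurableSet_dominanceRegion w) (integrable_sq_snd_mul_mul hi₁ hs₂)]
  simp only [Hfun, indicator_apply, dominanceRegion, mem_ofPred_eq]

lemma Gfun_eq_setIntegral (hi₂ : Integrable f₂) (hs₁ : Integrable fun x => x ^ 2 * f₁ x) (w : ℝ) :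
    Gfun f₁ f₂ w = ∫ z in (dominanceRegion w)ᶜ, z.1 ^ 2 * f₂ z.2 * f₁ z.1 := by
  rw [Measure.volume_eq_prod, ← integral_integral_indicator_mul_mul
    (measurableSet_dominanceRegion w).compl (integrable_sq_fst_mul_mul hi₂ hs₁)]
  simp only [Gfun, indicator_apply, dominanceRegion, mem_compl_iff, mem_ofPred_eq, not_lt]

lemma monotone_Hfun (h₁ : 0 ≤ f₁) (h₂ : 0 ≤ f₂) (hi₁ : Integrable f₁)
    (hs₂ : Integrable fun x => x ^ 2 * f₂ x) : Monotone (Hfun f₁ f₂) := by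
  intro a b hab
  rw [Hfun_eq_setIntegral_s16 hi₁ hs₂, Hfun_eq_setIntegral_s16 hi₁ hs₂]
  exact setIntegral_mono_set (integrable_sq_snd_mul_mul hi₁ hs₂).integrableOn
    (ae_of_all _ fun z => mul_nonneg (mul_nonneg (sq_nonneg _) (h₂ _)) (h₁ _))
    (monotone_dominanceRegion hab).eventuallyLE

lemma antitone_Gfun (h₁ : 0 ≤ f₁) (h₂ : 0 ≤ f₂) (hi₂ : Integrable f₂)
    (hs₁ : Integrable fun x => x ^ 2 * f₁ x) : Antitone (Gfun f₁ f₂) := by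
  intro a b hab
  rw [Gfun_eq_setIntegral hi₂ hs₁, Gfun_eq_setIntegral hi₂ hs₁]
  exact setIntegral_mono_set (integrable_sq_fst_mul_mul hi₂ hs₁).integrableOn
    (ae_of_all _ fun z => mul_nonneg (mul_nonneg (sq_nonneg _) (h₂ _)) (h₁ _))
    (compl_subset_compl.2 (monotone_dominanceRegion hab)).eventuallyLE

lemma continuous_Lfun (w : ℝ) : Continuous (Lfun f₁ f₂ w) := by
  unfold Lfun
  fun_prop

lemma monotone_Lfun_sub_Lfun {a b : ℝ} (hH : Hfun f₁ f₂ a ≤ Hfun f₁ f₂ b)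
    (hG : Gfun f₁ f₂ b ≤ Gfun f₁ f₂ a) :
    Monotone fun θ => Lfun f₁ f₂ a θ - Lfun f₁ f₂ b θ := by
  have hslope : 0 ≤ (Gfun f₁ f₂ a - Gfun f₁ f₂ b) + (Hfun f₁ f₂ b - Hfun f₁ f₂ a) :=
    add_nonneg (sub_nonneg.2 hG) (sub_nonneg.2 hH)
  have haffine (θ : ℝ) : Lfun f₁ f₂ a θ - Lfun f₁ f₂ b θ =
      θ * ((Gfun f₁ f₂ a - Gfun f₁ f₂ b) + (Hfun f₁ f₂ b - Hfun f₁ f₂ a)) +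
        (Hfun f₁ f₂ a - Hfun f₁ f₂ b) := by
    unfold Lfun
    ring
  simpa only [haffine] using (monotone_mul_right_of_nonneg hslope).add_const _

end Loss

namespace GoodDensity

variable {f : ℝ → ℝ}

lemma nonneg (hf : GoodDensity f) : 0 ≤ f :=
  fun x => (hf.2.1 x).le

lemma integrable_s16 (hf : GoodDensity f) : Integrable f :=
  .of_integral_ne_zero (hf.2.2.2.1.trans_ne one_ne_zero)

lemma integrable_sq_mul_s16 (hf : GoodDensity f) : Integrable fun x => x ^ 2 * f x :=
  hf.2.2.2.2

end GoodDensity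

theorem stmt16_general {f₁ f₂ π : ℝ → ℝ} (h₁ : 0 ≤ f₁) (h₂ : 0 ≤ f₂)
    (hi₁ : Integrable f₁) (hi₂ : Integrable f₂)
    (hs₁ : Integrable fun x => x ^ 2 * f₁ x) (hs₂ : Integrable fun x => x ^ 2 * f₂ x)
    {n : ℕ} (hn : 1 ≤ n) {w θs : ℕ → ℝ}
    (hw : MonotoneOn w (Icc 1 n)) (hθ : MonotoneOn θs (Iic n))
    (hπ : IntervalIntegrable π volume (θs 0) (θs n))
    (hindiff : ∀ m, 1 ≤ m → m < n →
      Lfun f₁ f₂ (w m) (θs m) = Lfun f₁ f₂ (w (m + 1)) (θs m)) :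
    (∫ t in θs 0..θs n,
        ((Finset.Icc 1 n).inf' (Finset.nonempty_Icc.mpr hn) fun m => Lfun f₁ f₂ (w m) t) * π t) =
      ∑ m ∈ Finset.Icc 1 n, ∫ t in θs (m - 1)..θs m, Lfun f₁ f₂ (w m) t * π t := by
  have hcross (m : ℕ) (hm : 1 ≤ m) (hmn : m < n) :
      SingleCrossingAt (Lfun f₁ f₂ (w m)) (Lfun f₁ f₂ (w (m + 1))) (θs m) := by
    have hwm : w m ≤ w (m + 1) := hw ⟨hm, hmn.le⟩ ⟨m.succ_pos, hmn⟩ m.le_succ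
    exact singleCrossingAt_of_monotone_sub (monotone_Lfun_sub_Lfun
      (monotone_Hfun h₁ h₂ hi₁ hs₂ hwm) (antitone_Gfun h₁ h₂ hi₂ hs₁ hwm)) (hindiff m hm hmn)
  have hsub {i j : ℕ} (hij : i ≤ j) (hj : j ≤ n) : uIcc (θs i) (θs j) ⊆ uIcc (θs 0) (θs n) := by
    rw [uIcc_of_le (hθ (hij.trans hj) hj hij), uIcc_of_le (hθ n.zero_le self_mem_Iic n.zero_le)]
    exact Icc_subset_Icc (hθ n.zero_le (hij.trans hj) i.zero_le) (hθ hj self_mem_Iic hj)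
  refine intervalIntegral_eq_sum_Icc_of_eqOn (fun m hm => ?_) (fun m hm t ht => ?_)
  · have hπm := hπ.mono_set (hsub (m.sub_le 1) (Finset.mem_Icc.1 hm).2)
    exact hπm.continuousOn_mul (continuous_Lfun (w m)).continuousOn
  · have hmn := (Finset.mem_Icc.1 hm).2
    rw [uIcc_of_le (hθ ((m.sub_le 1).trans hmn) hmn (m.sub_le 1))] at ht
    rw [inf'_Icc_eq_of_singleCrossingAt hθ hcross hm ht]

/-- Let `0 < w₁ < ⋯ < wₙ < 1` with associated indifference thresholds
`0 = θ₀ < θ₁ < ⋯ < θₙ = 1`, where each interior `θ_m ∈ (w_m, w_{m+1})` solves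
`L(w_m∣θ_m) = L(w_{m+1}∣θ_m)`. Then the ex ante expected loss decomposes as
`𝓛(w₁,…,wₙ) = Σ_{m=1}^{n} ∫_{θ_{m−1}}^{θ_m} L(w_m∣θ) π(θ) dθ`. -/
theorem stmt16 (f₁ f₂ : ℝ → ℝ) (hf₁ : GoodDensity f₁) (hf₂ : GoodDensity f₂)
    (π : ℝ → ℝ) (hπ_meas : Measurable π) (hπ_nonneg : ∀ x, 0 ≤ π x)
    (hπ_total : (∫ θ in (0 : ℝ)..1, π θ) = 1)
    (n : ℕ) (hn : 1 ≤ n) (w θs : ℕ → ℝ)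
    (hw : ∀ i, 1 ≤ i → i ≤ n → w i ∈ Set.Ioo (0 : ℝ) 1)
    (hwmono : ∀ i j, 1 ≤ i → i < j → j ≤ n → w i < w j)
    (hθ0 : θs 0 = 0) (hθn : θs n = 1)
    (hθmono : ∀ i j, i < j → j ≤ n → θs i < θs j)
    (hθint : ∀ m, 1 ≤ m → m < n → θs m ∈ Set.Ioo (w m) (w (m + 1)) ∧
      Lfun f₁ f₂ (w m) (θs m) = Lfun f₁ f₂ (w (m + 1)) (θs m)) :
    (∫ t in (0 : ℝ)..1,
        ((Finset.Icc 1 n).inf' (Finset.nonempty_Icc.mpr hn)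
          fun m => Lfun f₁ f₂ (w m) t) * π t) =
      ∑ m ∈ Finset.Icc 1 n, ∫ t in (θs (m - 1))..(θs m), Lfun f₁ f₂ (w m) t * π t := by
  have hwm : StrictMonoOn w (Icc 1 n) := fun i hi j hj hij => hwmono i j hi.1 hij hj.2
  have hθm : StrictMonoOn θs (Iic n) := fun i _ j hj hij => hθmono i j hij hj
  have hπ : IntervalIntegrable π volume 0 1 :=
    intervalIntegral.intervalIntegrable_of_integral_ne_zero (hπ_total.trans_ne one_ne_zero)
  simpa only [hθ0, hθn] using stmt16_general hf₁.nonneg hf₂.nonneg hf₁.integrable_s16 hf₂.integrable_s16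
    hf₁.integrable_sq_mul_s16 hf₂.integrable_sq_mul_s16 hn hwm.monotoneOn hθm.monotoneOn
    (by rwa [hθ0, hθn]) fun m hm hmn => (hθint m hm hmn).2
end
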